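/- arXiv:1608.06353 — 6 statements merged into one kernel-verified Lean document; each statement's English description precedes it below -/
import Mathlib

section
/- Let M be a topological space and ≪ a binary relation on M whose graph {(x,y) ∈ M × M : x ≪ y} is open in the product topology. Let (A_k)_{k∈ℕ} be a sequence of achronal subsets of M, i.e. for each k there are no x, y ∈ A_k with x ≪ y. Then the Hausdorff lower limit of (A_k) is achronal; in particular, if the Hausdorff closed limit of (A_k) exists, it is achronal. -/
/-- The Hausdorff upper limit of a sequence of subsets: the set of points every
neighborhood of which meets `S k` for infinitely many `k`. -/
def hausdorffUpperLimit {M : Type*} [TopologicalSpace M] (S : ℕ → Set M) : Set M :=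
  {p | ∀ U ∈ nhds p, {k : ℕ | (U ∩ S k).Nonempty}.Infinite}

/-- The Hausdorff lower limit of a sequence of subsets: the set of points every
neighborhood of which meets `S k` for all but finitely many `k`. -/
def hausdorffLowerLimit {M : Type*} [TopologicalSpace M] (S : ℕ → Set M) : Set M :=
  {p | ∀ U ∈ nhds p, {k : ℕ | ¬ (U ∩ S k).Nonempty}.Finite}

/-- A set is achronal (w.r.t. a relation `r`) if no two of its points are related. -/
def Achronal {M : Type*} (r : M → M → Prop) (A : Set M) : Prop :=
  ∀ x ∈ A, ∀ y ∈ A, ¬ r x y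

theorem achronal_hausdorffLowerLimit {M : Type*} [TopologicalSpace M]
    (r : M → M → Prop) (hopen : IsOpen {p : M × M | r p.1 p.2})
    (A : ℕ → Set M) (hach : ∀ k, Achronal r (A k)) :
    Achronal r (hausdorffLowerLimit A) ∧
      (hausdorffUpperLimit A = hausdorffLowerLimit A →
        Achronal r (hausdorffUpperLimit A)) := by
  have key : Achronal r (hausdorffLowerLimit A) := by
    intro x hx y hy hxy
    -- Openness of the relation at `(x, y)` gives a box `U ×ˢ V` on which it holds throughout.
    obtain ⟨U, hU, V, hV, hUV⟩ := mem_nhds_prod_iff.1 (hopen.mem_nhds (x := (x, y)) hxy)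
    -- All but finitely many `A k` meet both `U` and `V`,
    -- and such an `A k` contains related points, contradicting its achronality.
    obtain ⟨k, hk⟩ := ((hx U hU).union (hy V hV)).exists_notMem
    simp only [Set.mem_union, Set.mem_ofPred_eq, not_or, not_not] at hk
    obtain ⟨⟨a, haU, haA⟩, b, hbV, hbA⟩ := hk
    exact hach k a haA b hbA (hUV (Set.mk_mem_prod haU hbV))
  exact ⟨key, fun h => h ▸ key⟩
end

section
/- Let M be a topological space and ≪ a binary relation on M whose graph is open in M × M, which is future-dense (every x lies in the closure of I⁺(x) = {y : x ≪ y}) and past-dense (every x lies in the closure of I⁻(x) = {y : y ≪ x}). Suppose Q ⊆ M satisfies I⁻(Q) ⊆ Q, where I⁻(Q) = {x : ∃ q ∈ Q, x ≪ q}. Then the interior of Q equals I⁻(Q), and the topological boundary of Q equals the topological boundary of I⁻(Q). -/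
/-!
The past `Iminus r Q` is open because the graph of `r` is, so it lies in the interior of `Q`;
future-density gives the reverse inclusion, since an interior point of `Q` has points of `Q`
in its future. Past-density makes `Iminus r Q` dense in `Q`, so the two sets have the same
closure as well as the same interior, hence the same frontier.
-/

/-- The timelike past of a set `S`: all points related to some point of `S`. -/
def Iminus {M : Type*} (r : M → M → Prop) (S : Set M) : Set M :=
  {x | ∃ s ∈ S, r x s}

theorem interior_eq_Iminus_of_pastConvex {M : Type*} [TopologicalSpace M]
    (r : M → M → Prop)
    (hopen : IsOpen {p : M × M | r p.1 p.2})
    (hfd : ∀ x : M, x ∈ closure {y | r x y})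
    (hpd : ∀ x : M, x ∈ closure {y | r y x})
    (Q : Set M) (hQ : Iminus r Q ⊆ Q) :
    interior Q = Iminus r Q ∧ frontier Q = frontier (Iminus r Q) := by
  -- `Iminus r Q` is a union of slices of the open graph of `r`.
  have hI : IsOpen (Iminus r Q) := by
    have h : Iminus r Q = ⋃ q ∈ Q, (fun x => (x, q)) ⁻¹' {p : M × M | r p.1 p.2} := by
      ext x
      simp [Iminus]
    rw [h]
    exact isOpen_biUnion fun q _ => hopen.preimage (by fun_prop)
  have hint : interior Q = Iminus r Q := by
    refine Set.Subset.antisymm (fun x hx => ?_) (interior_maximal hQ hI)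
    -- Future-density: the neighbourhood `interior Q` of `x` meets the future of `x`.
    obtain ⟨y, hy, hxy⟩ := mem_closure_iff.1 (hfd x) _ isOpen_interior hx
    exact ⟨y, interior_subset hy, hxy⟩
  -- Past-density: each `q ∈ Q` is a limit of points of its own past.
  have hcl : closure Q = closure (Iminus r Q) := by
    refine Set.Subset.antisymm (closure_minimal (fun q hq => ?_) isClosed_closure)
      (closure_mono hQ)
    have hsub : {y | r y q} ⊆ Iminus r Q := fun y hy => ⟨q, hq, hy⟩
    exact closure_mono hsub (hpd q)
  exact ⟨hint, by rw [frontier, frontier, hcl, hint, hI.interior_eq]⟩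
end

section
/- Let M be a topological space and ≪ a transitive binary relation on M whose graph is open in M × M and which is future-dense and past-dense. Let P ⊆ M be a past set, i.e. I⁻(P) = P, and set A := ∂P (its topological boundary) and F := M \ closure(P). Then: P is open; A is achronal (no x, y ∈ A satisfy x ≪ y); F is a future set, i.e. I⁺(F) = F; ∂F = ∂P = A; M is the disjoint union of P, A, and F; and moreover I⁻(A) ⊆ P and I⁺(A) ⊆ F. -/
/-- The timelike future of a set `S`: all points to which some point of `S` is related. -/
def Iplus {M : Type*} (r : M → M → Prop) (S : Set M) : Set M :=
  {y | ∃ s ∈ S, r s y}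

theorem mem_of_rel_mem_closure {M : Type*} [TopologicalSpace M] {r : M → M → Prop}
    (hopen : IsOpen {p : M × M | r p.1 p.2}) {P : Set M} (hP : Iminus r P = P)
    {x y : M} (hxy : r x y) (hy : y ∈ closure P) : x ∈ P := by
  have hfut : IsOpen {z | r x z} := hopen.preimage (Continuous.prodMk_right x)
  obtain ⟨p, hxp, hp⟩ := mem_closure_iff.1 hy _ hfut hxy
  rw [← hP]
  exact ⟨p, hp, hxp⟩

theorem achronal_boundary_of_past_set {M : Type*} [TopologicalSpace M]
    (r : M → M → Prop)
    (htrans : Transitive r)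
    (hopen : IsOpen {p : M × M | r p.1 p.2})
    (hfd : ∀ x : M, x ∈ closure {y | r x y})
    (hpd : ∀ x : M, x ∈ closure {y | r y x})
    (P : Set M) (hP : Iminus r P = P) :
    IsOpen P ∧
    Achronal r (frontier P) ∧
    Iplus r ((closure P)ᶜ) = (closure P)ᶜ ∧
    frontier ((closure P)ᶜ) = frontier P ∧
    P ∪ frontier P ∪ (closure P)ᶜ = Set.univ ∧
    Disjoint P (frontier P) ∧
    Disjoint P ((closure P)ᶜ) ∧
    Disjoint (frontier P) ((closure P)ᶜ) ∧
    Iminus r (frontier P) ⊆ P ∧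
    Iplus r (frontier P) ⊆ (closure P)ᶜ := by
  have key : ∀ {x y : M}, r x y → y ∈ closure P → x ∈ P :=
    fun hxy hy => mem_of_rel_mem_closure hopen hP hxy hy
  have hPo : IsOpen P := by
    rw [isOpen_iff_mem_nhds]
    intro x hx
    rw [← hP] at hx
    obtain ⟨s, hs, hxs⟩ := hx
    have hpast : IsOpen {z | r z s} := hopen.preimage (Continuous.prodMk_left s)
    exact Filter.mem_of_superset (hpast.mem_nhds hxs) fun z hz => key hz (subset_closure hs)
  have hint : interior (closure P) = P := by
    refine subset_antisymm (fun x hx => ?_) (interior_maximal subset_closure hPo)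
    obtain ⟨y, hy, hxy⟩ := mem_closure_iff.1 (hfd x) _ isOpen_interior hx
    exact key hxy (interior_subset hy)
  have hfr : frontier P = closure P \ P := hPo.frontier_eq
  have hIplus : Iplus r (frontier P) ⊆ (closure P)ᶜ := by
    rintro y ⟨a, ha, hay⟩ hy
    rw [hfr] at ha
    exact ha.2 (key hay hy)
  refine ⟨hPo, fun x hx y hy hxy => hIplus ⟨x, hx, hxy⟩ (frontier_subset_closure hy),
    subset_antisymm ?_ ?_, ?_, ?_, ?_, ?_, ?_, ?_, hIplus⟩
  · rintro y ⟨s, hs, hsy⟩ hy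
    exact hs (subset_closure (key hsy hy))
  · intro y hy
    obtain ⟨s, hs, hsy⟩ := mem_closure_iff.1 (hpd y) _ isClosed_closure.isOpen_compl hy
    exact ⟨s, hs, hsy⟩
  · rw [frontier_compl, isClosed_closure.frontier_eq, hint, hfr]
  · rw [hfr, Set.union_sdiff_cancel subset_closure, Set.union_compl_self]
  · rw [hfr]
    exact Set.disjoint_sdiff_right
  · exact Set.disjoint_compl_right_iff_subset.2 subset_closure
  · exact Set.disjoint_compl_right_iff_subset.2 frontier_subset_closure
  · rintro x ⟨a, ha, hxa⟩
    exact key hxa (frontier_subset_closure ha)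
end

section
/- Let M be a topological space and ≪ a transitive binary relation on M whose graph is open in M × M and which is future-dense and past-dense. Let (P_k)_{k∈ℕ} be a sequence of past sets (I⁻(P_k) = P_k for all k) whose Hausdorff closed limit Π_∞ exists. Then I⁻(Π_∞) equals the interior of Π_∞, and P_∞ := interior(Π_∞) is itself a past set, i.e. I⁻(P_∞) = P_∞. -/
theorem interior_hausdorffLimit_of_past_sets {M : Type*} [TopologicalSpace M]
    (r : M → M → Prop)
    (htrans : Transitive r)
    (hopen : IsOpen {p : M × M | r p.1 p.2})
    (hfd : ∀ x : M, x ∈ closure {y | r x y})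
    (hpd : ∀ x : M, x ∈ closure {y | r y x})
    (P : ℕ → Set M) (hP : ∀ k, Iminus r (P k) = P k)
    (PiInf : Set M)
    (hup : hausdorffUpperLimit P = PiInf) (hlow : hausdorffLowerLimit P = PiInf) :
    Iminus r PiInf = interior PiInf ∧ Iminus r (interior PiInf) = interior PiInf := by
  -- If `x ≪ s` with `s` in the limit, the open future of `x` meets almost every `P k`,
  -- so `x ∈ I⁻(P k) = P k` for almost every `k`.
  have hsub : Iminus r PiInf ⊆ PiInf := by
    rintro x ⟨s, hs, hxs⟩
    rw [← hlow] at hs ⊢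
    have hU : {y | r x y} ∈ nhds s :=
      (hopen.preimage (Continuous.prodMk_right x)).mem_nhds hxs
    intro V hV
    refine (hs _ hU).subset fun k hk hne => hk ?_
    obtain ⟨y, hxy, hy⟩ := hne
    exact ⟨x, mem_of_mem_nhds hV, hP k ▸ ⟨y, hy, hxy⟩⟩
  have hIopen : IsOpen (Iminus r PiInf) := by
    have h : Iminus r PiInf = ⋃ s ∈ PiInf, {x | r x s} := by
      ext x
      simp [Iminus]
    rw [h]
    exact isOpen_biUnion fun s _ => hopen.preimage (Continuous.prodMk_left s)
  -- Future-density: an open set meets the future of each of its points.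
  have hint : interior PiInf ⊆ Iminus r (interior PiInf) := fun x hx =>
    mem_closure_iff.1 (hfd x) _ isOpen_interior hx
  have hmono : Iminus r (interior PiInf) ⊆ Iminus r PiInf :=
    fun x ⟨s, hs, hxs⟩ => ⟨s, interior_subset hs, hxs⟩
  have hle : Iminus r PiInf ⊆ interior PiInf := interior_maximal hsub hIopen
  exact ⟨hle.antisymm (hint.trans hmono), (hmono.trans hle).antisymm hint⟩
end

section
/- Let M be a locally connected topological space and ≪ a transitive binary relation on M whose graph is open in M × M and which is future-dense and past-dense. Let (P_k)_{k∈ℕ} be a sequence of past sets (I⁻(P_k) = P_k for all k) whose Hausdorff closed limit Π_∞ exists. Then the sequence of topological boundaries A_k := ∂P_k has a Hausdorff closed limit, and this limit equals ∂Π_∞, which in turn equals ∂(interior(Π_∞)). -/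
section Helpers

open Set Filter Topology

variable {M : Type*} [TopologicalSpace M]

lemma mem_hausdorffLowerLimit_iff {S : ℕ → Set M} {p : M} :
    p ∈ hausdorffLowerLimit S ↔ ∀ U ∈ 𝓝 p, ∀ᶠ k in atTop, (U ∩ S k).Nonempty := by
  simp only [← Nat.cofinite_eq_atTop]
  rfl

lemma mem_hausdorffUpperLimit_iff {S : ℕ → Set M} {p : M} :
    p ∈ hausdorffUpperLimit S ↔ ∀ U ∈ 𝓝 p, ∃ᶠ k in atTop, (U ∩ S k).Nonempty := by
  simp only [Nat.frequently_atTop_iff_infinite]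
  rfl

lemma hausdorffLowerLimit_subset_upperLimit (S : ℕ → Set M) :
    hausdorffLowerLimit S ⊆ hausdorffUpperLimit S := fun _ hp =>
  mem_hausdorffUpperLimit_iff.2 fun U hU =>
    (mem_hausdorffLowerLimit_iff.1 hp U hU).frequently

lemma isClosed_hausdorffLowerLimit (S : ℕ → Set M) : IsClosed (hausdorffLowerLimit S) := by
  refine isClosed_of_closure_subset fun p hp => mem_hausdorffLowerLimit_iff.2 fun U hU => ?_
  obtain ⟨q, hqU, hq⟩ := mem_closure_iff_nhds.1 hp _ (interior_mem_nhds.2 hU)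
  exact mem_hausdorffLowerLimit_iff.1 hq U (mem_interior_iff_mem_nhds.1 hqU)

lemma inter_frontier_nonempty_of_isPreconnected {V S : Set M} (hV : IsPreconnected V)
    (hS : (V ∩ S).Nonempty) (hSc : (V ∩ Sᶜ).Nonempty) : (V ∩ frontier S).Nonempty := by
  by_contra hne
  have hfr : ∀ x ∈ V, x ∈ closure S → x ∈ interior S := fun x hxV hx => by
    by_contra hxi
    exact hne ⟨x, hxV, hx, hxi⟩
  obtain ⟨a, haV, ha⟩ := hS
  obtain ⟨b, hbV, hb⟩ := hSc
  obtain ⟨z, -, hzi, hzc⟩ := hV (interior S) (closure S)ᶜ isOpen_interior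
    isClosed_closure.isOpen_compl
    (fun x hx => (em (x ∈ closure S)).imp (hfr x hx) id)
    ⟨a, haV, hfr a haV (subset_closure ha)⟩
    ⟨b, hbV, fun hbc => hb (interior_subset (hfr b hbV hbc))⟩
  exact hzc (subset_closure (interior_subset hzi))

lemma isOpen_future {r : M → M → Prop} (hopen : IsOpen {p : M × M | r p.1 p.2}) (x : M) :
    IsOpen {y | r x y} :=
  hopen.preimage (f := fun y => (x, y)) (by fun_prop)

lemma isOpen_past {r : M → M → Prop} (hopen : IsOpen {p : M × M | r p.1 p.2}) (y : M) :
    IsOpen {x | r x y} :=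
  hopen.preimage (f := fun x => (x, y)) (by fun_prop)

/-- A point chronologically before a point of the lower limit of past sets lies in almost all
of them. -/
lemma eventually_mem_of_rel {r : M → M → Prop} (hopen : IsOpen {p : M × M | r p.1 p.2})
    {P : ℕ → Set M} (hP : ∀ k, Iminus r (P k) = P k) {x p : M}
    (hp : p ∈ hausdorffLowerLimit P) (hxp : r x p) : ∀ᶠ k in atTop, x ∈ P k := by
  filter_upwards [mem_hausdorffLowerLimit_iff.1 hp _ ((isOpen_future hopen x).mem_nhds hxp)]
    with k ⟨s, hxs, hs⟩
  rw [← hP k]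
  exact ⟨s, hs, hxs⟩

/-- The interior of the lower limit of past sets contains the past of each of its points. -/
lemma past_subset_interior {r : M → M → Prop} (hopen : IsOpen {p : M × M | r p.1 p.2})
    {P : ℕ → Set M} (hP : ∀ k, Iminus r (P k) = P k) {p : M}
    (hp : p ∈ hausdorffLowerLimit P) : {x | r x p} ⊆ interior (hausdorffLowerLimit P) := by
  refine interior_maximal (fun x hx => mem_hausdorffLowerLimit_iff.2 fun U hU => ?_)
    (isOpen_past hopen p)
  filter_upwards [eventually_mem_of_rel hopen hP hp hx] with k hk
  exact ⟨x, mem_of_mem_nhds hU, hk⟩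

end Helpers

open Set Filter Topology

theorem hausdorffLimit_of_boundaries {M : Type*} [TopologicalSpace M]
    [LocallyConnectedSpace M]
    (r : M → M → Prop)
    (htrans : Transitive r)
    (hopen : IsOpen {p : M × M | r p.1 p.2})
    (hfd : ∀ x : M, x ∈ closure {y | r x y})
    (hpd : ∀ x : M, x ∈ closure {y | r y x})
    (P : ℕ → Set M) (hP : ∀ k, Iminus r (P k) = P k)
    (PiInf : Set M)
    (hup : hausdorffUpperLimit P = PiInf) (hlow : hausdorffLowerLimit P = PiInf) :
    hausdorffUpperLimit (fun k => frontier (P k)) = frontier PiInf ∧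
    hausdorffLowerLimit (fun k => frontier (P k)) = frontier PiInf ∧
    frontier PiInf = frontier (interior PiInf) := by
  have hclosed : IsClosed PiInf := hlow ▸ isClosed_hausdorffLowerLimit P
  have hreg : closure (interior PiInf) = PiInf := by
    refine (hclosed.closure_interior_subset).antisymm fun p hp => ?_
    subst hlow
    exact closure_mono (past_subset_interior hopen hP hp) (hpd p)
  have hupper : hausdorffUpperLimit (fun k => frontier (P k)) ⊆ frontier PiInf := by
    intro p hp
    rw [mem_hausdorffUpperLimit_iff] at hp
    rw [hclosed.frontier_eq]
    constructor
    · rw [← hup, mem_hausdorffUpperLimit_iff]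
      intro U hU
      refine (hp _ (interior_mem_nhds.2 hU)).mono fun k ⟨y, hyU, hy⟩ => ?_
      obtain ⟨z, hzU, hz⟩ := mem_closure_iff.1 (frontier_subset_closure hy) _ isOpen_interior hyU
      exact ⟨z, interior_subset hzU, hz⟩
    · intro hpi
      obtain ⟨q, hqi, hpq⟩ := mem_closure_iff.1 (hfd p) _ isOpen_interior hpi
      obtain ⟨q', hqi', hqq'⟩ := mem_closure_iff.1 (hfd q) _ isOpen_interior hqi
      have hq' : q' ∈ hausdorffLowerLimit P := hlow ▸ interior_subset hqi'
      obtain ⟨k, ⟨y, hyq, hy⟩, hk⟩ := ((hp _ ((isOpen_past hopen q).mem_nhds hpq)).and_eventually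
        (eventually_mem_of_rel hopen hP hq' hqq')).exists
      refine hy.2 (interior_maximal (fun x hx => ?_) (isOpen_past hopen q) hyq)
      rw [← hP k]
      exact ⟨q, hk, hx⟩
  have hlower : frontier PiInf ⊆ hausdorffLowerLimit (fun k => frontier (P k)) := by
    intro p hp
    rw [hclosed.frontier_eq] at hp
    rw [mem_hausdorffLowerLimit_iff]
    intro U hU
    obtain ⟨V, hVU, hVo, hpV, hVc⟩ :=
      locallyConnectedSpace_iff_subsets_isOpen_isConnected.1 inferInstance p U hU
    obtain ⟨y, hyV, hy⟩ : ∃ y ∈ V, y ∉ PiInf :=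
      not_subset.1 fun h => hp.2 (interior_maximal h hVo hpV)
    have hy' : ∀ᶠ k in atTop, y ∉ P k := by
      rw [← hup, mem_hausdorffUpperLimit_iff] at hy
      push Not at hy
      obtain ⟨W, hW, hW'⟩ := hy
      filter_upwards [hW'] with k hk hyk
      exact notMem_empty y (hk ▸ ⟨mem_of_mem_nhds hW, hyk⟩)
    have hpl : p ∈ hausdorffLowerLimit P := hlow ▸ hp.1
    filter_upwards [hy', mem_hausdorffLowerLimit_iff.1 hpl V (hVo.mem_nhds hpV)] with k hyk hVk
    exact (inter_frontier_nonempty_of_isPreconnected hVc.isPreconnected hVk ⟨y, hyV, hyk⟩).mono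
      (inter_subset_inter_left _ hVU)
  have hlu := hausdorffLowerLimit_subset_upperLimit (fun k => frontier (P k))
  refine ⟨hupper.antisymm (hlower.trans hlu), (hlu.trans hupper).antisymm hlower, ?_⟩
  rw [hclosed.frontier_eq, isOpen_interior.frontier_eq, hreg]
end

section
/- Let n > 0 be a real number, and let H : ℝ → ℝ be differentiable at every point of [0, ∞), with derivative satisfying H′(t) ≥ H(t)²/n − n for all t ≥ 0. If H(0) ≥ n, then H(t) = n for all t ≥ 0. -/
/-!
Put `w t = exp (-2t) * (H t - n)`. Since `H² / n - n = 2 (H - n) + (H - n)² / n`, the Riccati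
inequality becomes `w' ≥ exp (2t) * w² / n ≥ w² / n` for `t ≥ 0`. Hence `w` is nondecreasing, which
gives `H ≥ n`. If `w a > 0` for some `a`, then `w > 0` on `[a, ∞)` and `(-1/w)' ≥ 1/n` there, so
`-1/w` would be nonnegative by time `a + n / w a`, a contradiction.
-/

/-- A function that satisfies `w' ≥ w² / n` on a whole half-line is nowhere positive on it:
a positive value would force blow-up in finite time. -/
lemma nonpos_of_sq_div_le_deriv {n a : ℝ} (hn : 0 < n) {w w' : ℝ → ℝ}
    (hw : ∀ t, a ≤ t → HasDerivAt w (w' t) t) (hw' : ∀ t, a ≤ t → w t ^ 2 / n ≤ w' t) :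
    w a ≤ 0 := by
  by_contra! ha
  have hmono : MonotoneOn w (Set.Ici a) := by
    refine monotoneOn_of_hasDerivWithinAt_nonneg (convex_Ici a)
      (fun t ht => (hw t ht).continuousAt.continuousWithinAt)
      (fun t ht => (hw t (interior_subset ht)).hasDerivWithinAt) (fun t ht => ?_)
    exact le_trans (by positivity) (hw' t (interior_subset ht))
  have hpos : ∀ t, a ≤ t → 0 < w t := fun t ht =>
    ha.trans_le (hmono Set.self_mem_Ici ht ht)
  have hd : ∀ t, a ≤ t →
      HasDerivAt (fun s => -(w s)⁻¹ - s / n) (-(-w' t / w t ^ 2) - 1 / n) t := fun t ht =>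
    ((hw t ht).fun_inv (hpos t ht).ne').fun_neg.fun_sub ((hasDerivAt_id' t).div_const n)
  have hmono' : MonotoneOn (fun s => -(w s)⁻¹ - s / n) (Set.Ici a) := by
    refine monotoneOn_of_hasDerivWithinAt_nonneg (convex_Ici a)
      (fun t ht => (hd t ht).continuousAt.continuousWithinAt)
      (fun t ht => (hd t (interior_subset ht)).hasDerivWithinAt) (fun t ht => ?_)
    have h1 := hw' t (interior_subset ht)
    have h2 : 0 < w t := hpos t (interior_subset ht)
    have h3 : 1 / n ≤ w' t / w t ^ 2 := by
      rw [le_div_iff₀ (by positivity)]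
      calc 1 / n * w t ^ 2 = w t ^ 2 / n := by ring
        _ ≤ w' t := h1
    rw [neg_div, neg_neg]
    linarith
  have hb : a ≤ a + n / w a := by
    have : 0 < n / w a := by positivity
    linarith
  have key := hmono' Set.self_mem_Ici hb hb
  have hwb : 0 < (w (a + n / w a))⁻¹ := inv_pos.mpr (hpos _ hb)
  have he : (a + n / w a) / n = a / n + (w a)⁻¹ := by field_simp
  simp only [he] at key
  linarith

theorem riccati_rigidity (n : ℝ) (hn : 0 < n) (H : ℝ → ℝ)
    (hdiff : ∀ t ∈ Set.Ici (0 : ℝ), DifferentiableAt ℝ H t)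
    (hderiv : ∀ t ∈ Set.Ici (0 : ℝ), deriv H t ≥ H t ^ 2 / n - n)
    (h0 : H 0 ≥ n) :
    ∀ t ∈ Set.Ici (0 : ℝ), H t = n := by
  set w : ℝ → ℝ := fun t => Real.exp (-2 * t) * (H t - n) with hw_def
  set w' : ℝ → ℝ := fun t =>
    Real.exp (-2 * t) * (-2 * 1) * (H t - n) + Real.exp (-2 * t) * deriv H t with hw'_def
  have hw : ∀ t, 0 ≤ t → HasDerivAt w (w' t) t := fun t ht =>
    (((hasDerivAt_id' t).const_mul (-2)).exp).fun_mul ((hdiff t ht).hasDerivAt.sub_const n)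
  have hw' : ∀ t, 0 ≤ t → w t ^ 2 / n ≤ w' t := by
    intro t ht
    have hE : 0 < Real.exp (-2 * t) := Real.exp_pos _
    have hE1 : Real.exp (-2 * t) ≤ 1 := Real.exp_le_one_iff.mpr (by linarith)
    have hsplit : H t ^ 2 / n - n = 2 * (H t - n) + (H t - n) ^ 2 / n := by
      field_simp
      ring
    have h1 : (H t - n) ^ 2 / n ≤ deriv H t - 2 * (H t - n) := by
      have := hderiv t ht
      linarith
    calc w t ^ 2 / n
        = Real.exp (-2 * t) * (Real.exp (-2 * t) * ((H t - n) ^ 2 / n)) := by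
          simp only [hw_def]; ring
      _ ≤ Real.exp (-2 * t) * (1 * (deriv H t - 2 * (H t - n))) := by gcongr
      _ = w' t := by simp only [hw'_def]; ring
  have hmono : MonotoneOn w (Set.Ici 0) := by
    refine monotoneOn_of_hasDerivWithinAt_nonneg (convex_Ici 0)
      (fun t ht => (hw t ht).continuousAt.continuousWithinAt)
      (fun t ht => (hw t (interior_subset ht)).hasDerivWithinAt) (fun t ht => ?_)
    exact le_trans (by positivity) (hw' t (interior_subset ht))
  intro t ht
  have hw0 : 0 ≤ w 0 := mul_nonneg (Real.exp_pos _).le (sub_nonneg.mpr h0)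
  have hge : 0 ≤ w t := hw0.trans (hmono Set.self_mem_Ici ht ht)
  have hle : w t ≤ 0 := nonpos_of_sq_div_le_deriv hn
    (fun s hs => hw s (le_trans ht hs)) (fun s hs => hw' s (le_trans ht hs))
  have hz : Real.exp (-2 * t) * (H t - n) = 0 := le_antisymm hle hge
  exact sub_eq_zero.mp ((mul_eq_zero.mp hz).resolve_left (Real.exp_pos _).ne')
end
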